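/- Let N ≥ 3, p > 0, α, β ∈ ℝ, and let φ : (0,∞) → (0,∞) be continuous and satisfy, for some constants c₁, c₂ > 0: c₁ r^α ≤ φ(r) ≤ c₂ r^α for all 0 < r < 1, and c₁ r^β ≤ φ(r) ≤ c₂ r^β for all r > 1. Then there exists a constant c > 0, depending only on N, p, α, β, c₁, c₂, such that every C² positive solution u of −Δu = φ(|x|) u^{−p} on ℝ^N \ {0} satisfies u(x) ≥ c |x|^{(2+α)/(1+p)} for all x with 0 < |x| < 1, and u(x) ≥ c |x|^{(2+β)/(1+p)} for all x with |x| > 1. -/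

import Mathlib

/-!
Fix `x₀ ≠ 0` and put `ρ = ‖x₀‖ / 2`. The function `u + (u x₀ / ρ ^ 2) * ‖· - x₀‖ ^ 2` takes the
value `u x₀` at `x₀` and larger values on the sphere of radius `ρ` about `x₀`, so it has a minimum
`z` inside the ball. There `u z ≤ u x₀` and `-Δu(z) ≤ 2N u(x₀) / ρ ^ 2`. If `-Δu ≥ K u ^ (-p)` on
the ball, then `K u(x₀) ^ (-p) ≤ K u(z) ^ (-p) ≤ 2N u(x₀) / ρ ^ 2`, that is
`u(x₀) ^ (1 + p) ≥ K ρ ^ 2 / (2N)`. On this ball `‖x‖` is comparable to `‖x₀‖`, so `K` may be taken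
to be a fixed multiple of `‖x₀‖ ^ α` or `‖x₀‖ ^ β`. The two power laws agree at `‖x‖ = 1`, which
keeps the multiple uniform for balls crossing the unit sphere.
-/

open Metric Set MeasureTheory Filter

noncomputable def laplacian {N : ℕ} (u : EuclideanSpace ℝ (Fin N) → ℝ)
    (x : EuclideanSpace ℝ (Fin N)) : ℝ :=
  ∑ i, iteratedFDeriv ℝ 2 u x ![EuclideanSpace.single i 1, EuclideanSpace.single i 1]

/-- A `C²` positive solution of `-Δu = φ(|x|) u^{-p}` on `ℝ^N \ {0}`. -/
def IsSol {N : ℕ} (φ : ℝ → ℝ) (p : ℝ) (u : EuclideanSpace ℝ (Fin N) → ℝ) : Prop :=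
  ContDiffOn ℝ 2 u {(0 : EuclideanSpace ℝ (Fin N))}ᶜ ∧
    ∀ x : EuclideanSpace ℝ (Fin N), x ≠ 0 →
      0 < u x ∧ -laplacian u x = φ ‖x‖ * u x ^ (-p)

open scoped Laplacian Topology
open Module (finrank)

section MinimumPrinciple

variable {E : Type*} [NormedAddCommGroup E]

lemma deriv_deriv_nonneg_of_isLocalMin {g : ℝ → ℝ} {t : ℝ} (hmin : IsLocalMin g t)
    (hg : ContinuousAt g t) : 0 ≤ deriv (deriv g) t := by
  by_contra! hneg
  have hmax : IsLocalMax g t := isLocalMax_of_deriv_deriv_neg hneg hmin.deriv_eq_zero hg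
  have hconst : g =ᶠ[𝓝 t] fun _ => g t := by
    filter_upwards [hmin, hmax] with s h₁ h₂ using le_antisymm h₂ h₁
  have hzero : deriv (deriv g) t = 0 := by simpa using hconst.deriv.deriv_eq
  exact hneg.ne hzero

lemma deriv_deriv_add_smul [NormedSpace ℝ E] {f : E → ℝ} {z : E} (hf : ContDiffAt ℝ 2 f z)
    (e : E) :
    deriv (deriv fun t : ℝ => f (z + t • e)) 0 = iteratedFDeriv ℝ 2 f z ![e, e] := by
  have hline (t : ℝ) : HasDerivAt (fun t : ℝ => z + t • e) e t := by
    simpa using ((hasDerivAt_id t).smul_const e).const_add z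
  have hline_zero : Tendsto (fun t : ℝ => z + t • e) (𝓝 0) (𝓝 z) := by
    simpa using (hline 0).continuousAt.tendsto
  have hf_diff : ∀ᶠ x in 𝓝 z, DifferentiableAt ℝ f x :=
    (hf.eventually (by simp)).mono fun x hx => hx.differentiableAt (by norm_num)
  have hfirst : deriv (fun t : ℝ => f (z + t • e)) =ᶠ[𝓝 0] fun t => fderiv ℝ f (z + t • e) e :=
    (hline_zero.eventually hf_diff).mono fun t ht =>
      (ht.hasFDerivAt.comp_hasDerivAt t (hline t)).deriv
  have hfderiv : HasFDerivAt (fderiv ℝ f) (fderiv ℝ (fderiv ℝ f) z) (z + (0 : ℝ) • e) := by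
    have hC1 : ContDiffAt ℝ 1 (fderiv ℝ f) z := hf.fderiv_right (by norm_num)
    simpa using (hC1.differentiableAt one_ne_zero).hasFDerivAt
  have hsecond : HasDerivAt (fun t : ℝ => fderiv ℝ f (z + t • e) e)
      (fderiv ℝ (fderiv ℝ f) z e e) 0 :=
    (ContinuousLinearMap.apply ℝ ℝ e).hasFDerivAt.comp_hasDerivAt 0
      (hfderiv.comp_hasDerivAt 0 (hline 0))
  rw [hfirst.deriv_eq, hsecond.deriv]
  simp [iteratedFDeriv_two_apply]

lemma iteratedFDeriv_two_nonneg_of_isLocalMin [NormedSpace ℝ E] {f : E → ℝ} {z : E}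
    (hmin : IsLocalMin f z) (hf : ContDiffAt ℝ 2 f z) (e : E) :
    0 ≤ iteratedFDeriv ℝ 2 f z ![e, e] := by
  have hline : ContinuousAt (fun t : ℝ => z + t • e) 0 := by fun_prop
  have hmin_line : IsLocalMin f (z + (0 : ℝ) • e) := by simpa using hmin
  have hcont_line : ContinuousAt f (z + (0 : ℝ) • e) := by simpa using hf.continuousAt
  rw [← deriv_deriv_add_smul hf e]
  exact deriv_deriv_nonneg_of_isLocalMin
    (IsLocalMin.comp_continuous (g := fun t : ℝ => z + t • e) hmin_line hline)
    (ContinuousAt.comp (f := fun t : ℝ => z + t • e) hcont_line hline)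

variable [InnerProductSpace ℝ E] [FiniteDimensional ℝ E]

lemma laplacian_nonneg_of_isLocalMin {f : E → ℝ} {z : E} (hmin : IsLocalMin f z)
    (hf : ContDiffAt ℝ 2 f z) : 0 ≤ Δ f z := by
  rw [InnerProductSpace.laplacian_eq_iteratedFDeriv_stdOrthonormalBasis]
  exact Finset.sum_nonneg fun i _ => iteratedFDeriv_two_nonneg_of_isLocalMin hmin hf _

lemma laplacian_norm_sub_sq (x₀ z : E) :
    Δ (fun x => ‖x - x₀‖ ^ 2) z = 2 * finrank ℝ E := by
  have hfderiv : fderiv ℝ (fun x => ‖x - x₀‖ ^ 2) = fun x => (2 : ℝ) • innerSL ℝ (x - x₀) := by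
    ext1 x
    simpa [two_smul] using ((hasFDerivAt_id x).sub_const x₀).norm_sq.fderiv
  have hfderiv_two : fderiv ℝ (fun x => (2 : ℝ) • innerSL ℝ (x - x₀)) z = (2 : ℝ) • innerSL ℝ :=
    (((innerSL ℝ).hasFDerivAt.comp z ((hasFDerivAt_id z).sub_const x₀)).const_smul (2 : ℝ)).fderiv
  have hhessian (e : E) : iteratedFDeriv ℝ 2 (fun x => ‖x - x₀‖ ^ 2) z ![e, e] = 2 * ‖e‖ ^ 2 := by
    rw [iteratedFDeriv_two_apply, hfderiv, hfderiv_two, ← real_inner_self_eq_norm_sq]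
    rfl
  simp [InnerProductSpace.laplacian_eq_iteratedFDeriv_stdOrthonormalBasis, hhessian, mul_comm]

lemma continuousAt_laplacian {f : E → ℝ} {x : E} (hf : ContDiffAt ℝ 2 f x) :
    ContinuousAt (Δ f) x := by
  have hD : ContinuousAt (iteratedFDeriv ℝ 2 f) x :=
    (hf.iteratedFDeriv_right (m := 0) (i := 2) (by norm_num)).continuousAt
  rw [InnerProductSpace.laplacian_eq_iteratedFDeriv_stdOrthonormalBasis]
  exact tendsto_finsetSum _ fun i _ => hD.eval_const _

lemma exists_mem_ball_neg_laplacian_le {u : E → ℝ} {x₀ : E} {ρ : ℝ} (hρ : 0 < ρ)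
    (hcont : ContinuousOn u (closedBall x₀ ρ)) (hdiff : ContDiffOn ℝ 2 u (ball x₀ ρ))
    (hpos : ∀ x ∈ closedBall x₀ ρ, 0 < u x) :
    ∃ z ∈ ball x₀ ρ, u z ≤ u x₀ ∧ -Δ u z ≤ 2 * finrank ℝ E * u x₀ / ρ ^ 2 := by
  have hx₀ : x₀ ∈ closedBall x₀ ρ := mem_closedBall_self hρ.le
  have hu₀ := hpos x₀ hx₀
  set ε : ℝ := u x₀ / ρ ^ 2 with hε
  have hε_pos : 0 < ε := by positivity
  set q : E → ℝ := fun x => ‖x - x₀‖ ^ 2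
  obtain ⟨z, hz, hmin⟩ := (isCompact_closedBall x₀ ρ).exists_isMinOn ⟨x₀, hx₀⟩
    (f := u + ε • q) (hcont.add (by fun_prop))
  have hle : u z + ε * ‖z - x₀‖ ^ 2 ≤ u x₀ := by simpa [q] using hmin hx₀
  have hz_ball : z ∈ ball x₀ ρ := by
    rw [mem_ball_iff_norm]
    refine lt_of_pow_lt_pow_left₀ 2 hρ.le (lt_of_mul_lt_mul_left ?_ hε_pos.le)
    have : ε * ρ ^ 2 = u x₀ := div_mul_cancel₀ _ (by positivity)
    linarith [hpos z hz]
  have hu : ContDiffAt ℝ 2 u z := hdiff.contDiffAt (isOpen_ball.mem_nhds hz_ball)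
  have hq : ContDiffAt ℝ 2 q z := ((contDiff_id.sub contDiff_const).norm_sq ℝ).contDiffAt
  have hεq : ContDiffAt ℝ 2 (ε • q) z := hq.const_smul ε
  have hlap : 0 ≤ Δ (u + ε • q) z := laplacian_nonneg_of_isLocalMin
    (hmin.isLocalMin (closedBall_mem_nhds_of_mem hz_ball)) (hu.add hεq)
  rw [hu.laplacian_add hεq, InnerProductSpace.laplacian_smul ε hq, laplacian_norm_sub_sq,
    smul_eq_mul] at hlap
  refine ⟨z, hz_ball, ?_, ?_⟩
  · have : 0 ≤ ε * ‖z - x₀‖ ^ 2 := by positivity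
    linarith
  · calc -Δ u z ≤ ε * (2 * finrank ℝ E) := by linarith
      _ = 2 * finrank ℝ E * u x₀ / ρ ^ 2 := by rw [hε]; ring

lemma mul_sq_le_rpow_of_mul_rpow_neg_le_neg_laplacian {u : E → ℝ} {x₀ : E} {ρ p K : ℝ}
    (hρ : 0 < ρ) (hp : 0 ≤ p) (hK : 0 ≤ K) (hcont : ContinuousOn u (closedBall x₀ ρ))
    (hdiff : ContDiffOn ℝ 2 u (ball x₀ ρ)) (hpos : ∀ x ∈ closedBall x₀ ρ, 0 < u x)
    (hsuper : ∀ x ∈ ball x₀ ρ, K * u x ^ (-p) ≤ -Δ u x) :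
    K * ρ ^ 2 ≤ 2 * finrank ℝ E * u x₀ ^ (1 + p) := by
  obtain ⟨z, hz, hz_le, hz_lap⟩ := exists_mem_ball_neg_laplacian_le hρ hcont hdiff hpos
  have hu₀ : 0 < u x₀ := hpos x₀ (mem_closedBall_self hρ.le)
  have hu_z : 0 < u z := hpos z (ball_subset_closedBall hz)
  have hkey : K * u x₀ ^ (-p) ≤ 2 * finrank ℝ E * u x₀ / ρ ^ 2 :=
    calc K * u x₀ ^ (-p) ≤ K * u z ^ (-p) := by
          gcongr ?_ * ?_
          exact Real.rpow_le_rpow_of_nonpos hu_z hz_le (neg_nonpos.mpr hp)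
      _ ≤ -Δ u z := hsuper z hz
      _ ≤ _ := hz_lap
  rw [Real.rpow_neg hu₀.le, ← div_eq_mul_inv, div_le_div_iff₀ (by positivity) (by positivity)]
    at hkey
  rwa [Real.rpow_one_add' hu₀.le (by positivity), ← mul_assoc]

end MinimumPrinciple

section BrokenPower

/-- The broken power law with exponent `α` on `(0, 1]` and `β` on `[1, ∞)`: the radial weight
bounding `φ` from below, and the profile of the resulting bound on `u`. The product form makes
continuity across `1` and comparability of nearby values immediate. -/
noncomputable def brokenRpow (α β r : ℝ) : ℝ :=
  min r 1 ^ α * max r 1 ^ β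

variable {α β r : ℝ}

lemma brokenRpow_of_le_one (hr : r ≤ 1) : brokenRpow α β r = r ^ α := by
  simp [brokenRpow, hr]

lemma brokenRpow_of_one_le (hr : 1 ≤ r) : brokenRpow α β r = r ^ β := by
  simp [brokenRpow, hr]

lemma brokenRpow_pos (hr : 0 < r) : 0 < brokenRpow α β r := by
  unfold brokenRpow
  positivity

lemma continuousAt_brokenRpow (hr : 0 < r) : ContinuousAt (brokenRpow α β) r := by
  unfold brokenRpow
  have hmin : min r 1 ≠ 0 := by positivity
  have hmax : max r 1 ≠ 0 := by positivity
  exact ((continuousAt_id.min continuousAt_const).rpow_const (Or.inl hmin)).mul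
    ((continuousAt_id.max continuousAt_const).rpow_const (Or.inl hmax))

lemma brokenRpow_rpow (hr : 0 < r) (s : ℝ) :
    brokenRpow α β r ^ s = brokenRpow (α * s) (β * s) r := by
  unfold brokenRpow
  rw [Real.mul_rpow (by positivity) (by positivity), ← Real.rpow_mul (by positivity),
    ← Real.rpow_mul (by positivity)]

lemma sq_mul_brokenRpow (hr : 0 < r) :
    r ^ 2 * brokenRpow α β r = brokenRpow (2 + α) (2 + β) r := by
  have hmin : 0 < min r 1 := by positivity
  have hmax : 0 < max r 1 := by positivity
  have hr_eq : r = min r 1 * max r 1 := by rw [min_mul_max, mul_one]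
  unfold brokenRpow
  rw [Real.rpow_add hmin, Real.rpow_add hmax, Real.rpow_two, Real.rpow_two]
  nth_rewrite 1 [hr_eq]
  ring

lemma rpow_neg_abs_mul_rpow_le {a R : ℝ} (γ : ℝ) (ha : 0 < a) (hR : 0 < R) (hr : 0 < r)
    (hRr : R ≤ a * r) (hrR : r ≤ a * R) : a ^ (-|γ|) * R ^ γ ≤ r ^ γ := by
  rcases le_total 0 γ with hγ | hγ
  · rw [abs_of_nonneg hγ, Real.rpow_neg ha.le, inv_mul_le_iff₀ (by positivity),
      ← Real.mul_rpow ha.le hr.le]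
    exact Real.rpow_le_rpow hR.le hRr hγ
  · rw [abs_of_nonpos hγ, neg_neg, ← Real.mul_rpow ha.le hR.le]
    exact Real.rpow_le_rpow_of_nonpos hr hrR hγ

lemma rpow_mul_brokenRpow_le {a R : ℝ} (ha : 1 ≤ a) (hR : 0 < R) (hr : 0 < r)
    (hRr : R ≤ a * r) (hrR : r ≤ a * R) :
    a ^ (-(|α| + |β|)) * brokenRpow α β R ≤ brokenRpow α β r := by
  have ha₀ : 0 < a := one_pos.trans_le ha
  have hmin {s t : ℝ} (hst : s ≤ a * t) : min s 1 ≤ a * min t 1 := by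
    rw [mul_min_of_nonneg _ _ ha₀.le, mul_one]
    exact min_le_min hst ha
  have hmax {s t : ℝ} (hst : s ≤ a * t) : max s 1 ≤ a * max t 1 := by
    rw [mul_max_of_nonneg _ _ ha₀.le, mul_one]
    exact max_le_max hst ha
  unfold brokenRpow
  calc a ^ (-(|α| + |β|)) * (min R 1 ^ α * max R 1 ^ β)
      = a ^ (-|α|) * min R 1 ^ α * (a ^ (-|β|) * max R 1 ^ β) := by
        rw [neg_add, Real.rpow_add ha₀]; ring
    _ ≤ min r 1 ^ α * max r 1 ^ β := by
        gcongr
        · exact rpow_neg_abs_mul_rpow_le α ha₀ (by positivity) (by positivity) (hmin hRr) (hmin hrR)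
        · exact rpow_neg_abs_mul_rpow_le β ha₀ (by positivity) (by positivity) (hmax hRr) (hmax hrR)

end BrokenPower

section Supersolution

variable {E : Type*} [NormedAddCommGroup E] [InnerProductSpace ℝ E] [FiniteDimensional ℝ E]
  {u : E → ℝ} {p α β c : ℝ}

lemma mul_brokenRpow_mul_rpow_neg_le_neg_laplacian (hu : ContDiffOn ℝ 2 u {0}ᶜ)
    (hpos : ∀ x, x ≠ 0 → 0 < u x)
    (hα : ∀ x, x ≠ 0 → ‖x‖ < 1 → c * ‖x‖ ^ α * u x ^ (-p) ≤ -Δ u x)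
    (hβ : ∀ x, 1 < ‖x‖ → c * ‖x‖ ^ β * u x ^ (-p) ≤ -Δ u x) {x : E} (hx : x ≠ 0) :
    c * brokenRpow α β ‖x‖ * u x ^ (-p) ≤ -Δ u x := by
  have hdense : Dense (sphere (0 : E) 1)ᶜ :=
    interior_eq_empty_iff_dense_compl.mp (interior_sphere 0 one_ne_zero)
  have hx_closure : x ∈ closure ({0}ᶜ ∩ (sphere (0 : E) 1)ᶜ) :=
    hdense.open_subset_closure_inter isOpen_compl_singleton hx
  have hux : ContDiffAt ℝ 2 u x := hu.contDiffAt (isOpen_compl_singleton.mem_nhds hx)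
  have hlhs : ContinuousAt (fun y => c * brokenRpow α β ‖y‖ * u y ^ (-p)) x :=
    (continuousAt_const.mul (ContinuousAt.comp (continuousAt_brokenRpow (norm_pos_iff.mpr hx))
      continuous_norm.continuousAt)).mul (hux.continuousAt.rpow_const (Or.inl (hpos x hx).ne'))
  refine ContinuousWithinAt.closure_le hx_closure hlhs.continuousWithinAt
    (continuousAt_laplacian hux).neg.continuousWithinAt ?_
  rintro y ⟨hy, hy_sphere⟩
  rcases lt_or_gt_of_ne (show ‖y‖ ≠ 1 by simpa using hy_sphere) with hy_lt | hy_gt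
  · simpa only [brokenRpow_of_le_one hy_lt.le, Pi.neg_apply] using hα y hy hy_lt
  · simpa only [brokenRpow_of_one_le hy_gt.le, Pi.neg_apply] using hβ y hy_gt

lemma mul_brokenRpow_le_rpow (hp : 0 ≤ p) (hc : 0 ≤ c) (hu : ContDiffOn ℝ 2 u {0}ᶜ)
    (hpos : ∀ x, x ≠ 0 → 0 < u x)
    (hsuper : ∀ x, x ≠ 0 → c * brokenRpow α β ‖x‖ * u x ^ (-p) ≤ -Δ u x) {x : E} (hx : x ≠ 0) :
    c * 2 ^ (-(|α| + |β|)) * brokenRpow (2 + α) (2 + β) ‖x‖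
      ≤ 8 * finrank ℝ E * u x ^ (1 + p) := by
  have hR : 0 < ‖x‖ := norm_pos_iff.mpr hx
  set K := c * (2 ^ (-(|α| + |β|)) * brokenRpow α β ‖x‖) with hK
  have hnorm {y : E} (hy : y ∈ closedBall x (‖x‖ / 2)) : ‖x‖ ≤ 2 * ‖y‖ ∧ ‖y‖ ≤ 2 * ‖x‖ := by
    rw [mem_closedBall_iff_norm] at hy
    have := abs_le.mp ((abs_norm_sub_norm_le y x).trans hy)
    constructor <;> linarith
  have hball : closedBall x (‖x‖ / 2) ⊆ {0}ᶜ := by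
    rintro y hy rfl
    linarith [(hnorm hy).1, norm_zero (E := E)]
  have hsuper_ball : ∀ y ∈ ball x (‖x‖ / 2), K * u y ^ (-p) ≤ -Δ u y := by
    intro y hy
    have hy' := ball_subset_closedBall hy
    obtain ⟨hxy, hyx⟩ := hnorm hy'
    have hu_y := hpos y (hball hy')
    refine le_trans ?_ (hsuper y (hball hy'))
    rw [hK]
    gcongr
    exact rpow_mul_brokenRpow_le one_le_two hR (norm_pos_iff.mpr (hball hy')) hxy hyx
  have hbound : K * (‖x‖ / 2) ^ 2 ≤ 2 * finrank ℝ E * u x ^ (1 + p) :=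
    mul_sq_le_rpow_of_mul_rpow_neg_le_neg_laplacian (half_pos hR) hp
      (by have := brokenRpow_pos (α := α) (β := β) hR; positivity)
      (hu.continuousOn.mono hball) (hu.mono (ball_subset_closedBall.trans hball))
      (fun y hy => hpos y (hball hy)) hsuper_ball
  rw [← sq_mul_brokenRpow hR]
  linarith

variable (E α β) in
lemma exists_pos_mul_brokenRpow_le (hp : 0 ≤ p) (hc : 0 < c) :
    ∃ C : ℝ, 0 < C ∧ ∀ u : E → ℝ, ContDiffOn ℝ 2 u {0}ᶜ → (∀ x, x ≠ 0 → 0 < u x) →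
      (∀ x, x ≠ 0 → c * brokenRpow α β ‖x‖ * u x ^ (-p) ≤ -Δ u x) →
      ∀ x, x ≠ 0 → C * brokenRpow ((2 + α) / (1 + p)) ((2 + β) / (1 + p)) ‖x‖ ≤ u x := by
  -- The summand `1` keeps the constant positive in dimension zero.
  set k : ℝ := c * 2 ^ (-(|α| + |β|)) / (8 * finrank ℝ E + 1) with hk
  refine ⟨k ^ (1 + p)⁻¹, by positivity, fun u hu hpos hsuper x hx => ?_⟩
  have hR : 0 < ‖x‖ := norm_pos_iff.mpr hx
  have hu_x := hpos x hx
  have hw : 0 < brokenRpow (2 + α) (2 + β) ‖x‖ := brokenRpow_pos hR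
  have hbound : k * brokenRpow (2 + α) (2 + β) ‖x‖ ≤ u x ^ (1 + p) := by
    rw [hk, div_mul_eq_mul_div, div_le_iff₀ (by positivity)]
    have : 0 ≤ u x ^ (1 + p) := by positivity
    linarith [mul_brokenRpow_le_rpow hp hc.le hu hpos hsuper hx]
  rwa [div_eq_mul_inv, div_eq_mul_inv, ← brokenRpow_rpow hR,
    ← Real.mul_rpow (by positivity) hw.le,
    Real.rpow_inv_le_iff_of_pos (by positivity) hu_x.le (by positivity)]

end Supersolution

theorem statement_16_general (E : Type*) [NormedAddCommGroup E] [InnerProductSpace ℝ E]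
    [FiniteDimensional ℝ E] {p : ℝ} (hp : 0 ≤ p) (α β : ℝ) {c : ℝ} (hc : 0 < c) :
    ∃ C : ℝ, 0 < C ∧ ∀ u : E → ℝ, ContDiffOn ℝ 2 u {0}ᶜ → (∀ x, x ≠ 0 → 0 < u x) →
      (∀ x, x ≠ 0 → ‖x‖ < 1 → c * ‖x‖ ^ α * u x ^ (-p) ≤ -Δ u x) →
      (∀ x, 1 < ‖x‖ → c * ‖x‖ ^ β * u x ^ (-p) ≤ -Δ u x) →
      (∀ x, x ≠ 0 → ‖x‖ < 1 → C * ‖x‖ ^ ((2 + α) / (1 + p)) ≤ u x) ∧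
      (∀ x, 1 < ‖x‖ → C * ‖x‖ ^ ((2 + β) / (1 + p)) ≤ u x) := by
  obtain ⟨C, hC, hbound⟩ := exists_pos_mul_brokenRpow_le E α β hp hc
  refine ⟨C, hC, fun u hu hpos hα hβ => ?_⟩
  have hu_ge := hbound u hu hpos fun x hx =>
    mul_brokenRpow_mul_rpow_neg_le_neg_laplacian hu hpos hα hβ hx
  refine ⟨fun x hx hx_lt => ?_, fun x hx_gt => ?_⟩
  · simpa only [brokenRpow_of_le_one hx_lt.le] using hu_ge x hx
  · simpa only [brokenRpow_of_one_le hx_gt.le] using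
      hu_ge x (norm_pos_iff.mp (one_pos.trans hx_gt))

lemma laplacian_eq_innerProductSpace_laplacian {N : ℕ} (u : EuclideanSpace ℝ (Fin N) → ℝ) :
    laplacian u = Δ u := by
  simp [InnerProductSpace.laplacian_eq_iteratedFDeriv_orthonormalBasis u
    (EuclideanSpace.basisFun (Fin N) ℝ), funext_iff, laplacian]

lemma IsSol.mul_rpow_neg_le_neg_laplacian {N : ℕ} {φ : ℝ → ℝ} {p m : ℝ}
    {u : EuclideanSpace ℝ (Fin N) → ℝ} (hu : IsSol φ p u) {x : EuclideanSpace ℝ (Fin N)}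
    (hx : x ≠ 0) (hm : m ≤ φ ‖x‖) : m * u x ^ (-p) ≤ -Δ u x := by
  obtain ⟨hpos, heq⟩ := hu.2 x hx
  rw [← laplacian_eq_innerProductSpace_laplacian, heq]
  gcongr

/-- Step 3 in the proof of Theorem 4.2: universal lower bounds for solutions, with
a constant depending only on `N, p, α, β, c₁, c₂`. -/
theorem statement_16 {N : ℕ} (hN : 3 ≤ N) (p : ℝ) (hp : 0 < p) (α β : ℝ)
    (c₁ c₂ : ℝ) (hc₁ : 0 < c₁) (hc₂ : 0 < c₂) :
    ∃ c : ℝ, 0 < c ∧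
      ∀ φ : ℝ → ℝ, ContinuousOn φ (Ioi (0:ℝ)) → (∀ r : ℝ, 0 < r → 0 < φ r) →
        (∀ r : ℝ, 0 < r → r < 1 → c₁ * r ^ α ≤ φ r ∧ φ r ≤ c₂ * r ^ α) →
        (∀ r : ℝ, 1 < r → c₁ * r ^ β ≤ φ r ∧ φ r ≤ c₂ * r ^ β) →
        ∀ u : EuclideanSpace ℝ (Fin N) → ℝ, IsSol φ p u →
          (∀ x : EuclideanSpace ℝ (Fin N), x ≠ 0 → ‖x‖ < 1 →
            c * ‖x‖ ^ ((2 + α) / (1 + p)) ≤ u x) ∧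
          (∀ x : EuclideanSpace ℝ (Fin N), 1 < ‖x‖ →
            c * ‖x‖ ^ ((2 + β) / (1 + p)) ≤ u x) := by
  obtain ⟨c, hc, hbound⟩ := statement_16_general (EuclideanSpace ℝ (Fin N)) hp.le α β hc₁
  refine ⟨c, hc, fun φ _ _ hα hβ u hu => hbound u hu.1 (fun x hx => (hu.2 x hx).1) ?_ ?_⟩
  · exact fun x hx hx_lt =>
      hu.mul_rpow_neg_le_neg_laplacian hx (hα ‖x‖ (norm_pos_iff.mpr hx) hx_lt).1
  · exact fun x hx_gt => hu.mul_rpow_neg_le_neg_laplacian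
      (norm_pos_iff.mp (one_pos.trans hx_gt)) (hβ ‖x‖ hx_gt).1
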